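/- Assume condition (D1) (A is increasing on [0,1]) and that the probability measure m on ℝ has a finite first moment. Let F be the unique weak solution in 𝓕 of the Cauchy problem with initial condition F₀ = H*m. Then for every t > 0 there exists a finite constant C(t) > 0, with t ↦ C(t) nondecreasing, such that: for all x ≤ −C(t), (1/2) F₀(2x − C(t)) ≤ F_t(x) ≤ F₀(x/2 + C(t)) + exp(−x²/C(t)); and for all x ≥ C(t), (1/2)(1 − F₀(2x + C(t))) ≤ 1 − F_t(x) ≤ 1 − F₀(x/2 − C(t)) + exp(−x²/C(t)). -/

import Mathlib

open MeasureTheory Set Filter Topology Function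
open scoped ENNReal

noncomputable section

/-- `primitive f u = ∫₀^u f(v) dv`. -/
def primitive (f : ℝ → ℝ) : ℝ → ℝ := fun u => ∫ v in (0:ℝ)..u, f v

/-- The cumulative distribution function `H * μ` of a measure `μ` on `ℝ`. -/
def cdfOf (μ : MeasureTheory.Measure ℝ) : ℝ → ℝ := fun x => (μ (Set.Iic x)).toReal

/-- Pseudo-inverse of a cdf: `F⁻¹(u) = inf {x | F x > u}`. -/
def pinv (F : ℝ → ℝ) (u : ℝ) : ℝ := sInf {x : ℝ | u < F x}

/-- Wasserstein distance of order `p` between two cdfs, as an element of `[0,∞]`: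
`W_p(F,G) = (∫₀¹ |F⁻¹(u) - G⁻¹(u)|^p du)^(1/p)`. -/
def Wdist (p : ℝ) (F G : ℝ → ℝ) : ℝ≥0∞ :=
  (∫⁻ u in Set.Ioo (0:ℝ) 1, ENNReal.ofReal (|pinv F u - pinv G u| ^ p)) ^ (1/p)

/-- `F` is a weak solution of `∂ₜ F = (1/2) ∂ₓₓ (A (F)) - ∂ₓ (B (F))` with
initial condition `F₀`. -/
def IsWeakSolution (A B : ℝ → ℝ) (F₀ : ℝ → ℝ) (F : ℝ → ℝ → ℝ) : Prop :=
  ∀ g : ℝ → ℝ → ℝ, ContDiff ℝ (⊤ : ℕ∞) (Function.uncurry g) →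
    HasCompactSupport (Function.uncurry g) →
    ∀ t : ℝ, 0 ≤ t →
      ((∫ x : ℝ, g t x * F t x) - ∫ x : ℝ, g 0 x * F₀ x) =
        ∫ x : ℝ, ∫ s in (0:ℝ)..t,
          ((1/2) * A (F s x) * deriv (deriv (fun y => g s y)) x
            + B (F s x) * deriv (fun y => g s y) x
            + F s x * deriv (fun r => g r x) s)

/-- Membership in the class `𝓕`. -/
def MemF (F : ℝ → ℝ → ℝ) : Prop :=
  ∃ P : ℝ → ProbabilityMeasure ℝ,
    ContinuousOn P (Set.Ici 0) ∧
    (∀ t : ℝ, 0 ≤ t → Integrable (fun x => |x|) (P t : Measure ℝ)) ∧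
    (∀ T : ℝ, 0 < T → IntegrableOn (fun t => ∫ x, |x| ∂(P t : Measure ℝ)) (Set.Icc 0 T)) ∧
    (∀ t : ℝ, 0 ≤ t → ∀ x : ℝ, F t x = ((P t : Measure ℝ) (Set.Iic x)).toReal)

/-- Directional derivative. -/
def dirD (v : ℝ × ℝ) (Φ : ℝ × ℝ → ℝ) : ℝ × ℝ → ℝ := fun p => fderiv ℝ Φ p v

lemma dirD_contDiff (v : ℝ × ℝ) {Φ : ℝ × ℝ → ℝ} (h : ContDiff ℝ (⊤ : ℕ∞) Φ) :
    ContDiff ℝ (⊤ : ℕ∞) (dirD v Φ) := by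
  unfold dirD
  have h1 : ContDiff ℝ (⊤ : ℕ∞) (fderiv ℝ Φ) := h.fderiv_right (by simp)
  exact h1.clm_apply contDiff_const

lemma dirD_compact (v : ℝ × ℝ) {Φ : ℝ × ℝ → ℝ} (h : HasCompactSupport Φ) :
    HasCompactSupport (dirD v Φ) := h.fderiv_apply (𝕜 := ℝ) v

lemma dirD_hasDerivAt_snd {Φ : ℝ × ℝ → ℝ} (h : ContDiff ℝ (⊤ : ℕ∞) Φ) (s y : ℝ) :
    HasDerivAt (fun y => Φ (s, y)) (dirD (0, 1) Φ (s, y)) y := by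
  have h1 : HasFDerivAt Φ (fderiv ℝ Φ (s, y)) (s, y) :=
    (h.differentiable (by simp) _).hasFDerivAt
  have h2 : HasDerivAt (fun y : ℝ => (s, y)) ((0 : ℝ), (1 : ℝ)) y :=
    (hasDerivAt_const y s).prodMk (hasDerivAt_id y)
  exact h1.comp_hasDerivAt y h2

lemma dirD_hasDerivAt_fst {Φ : ℝ × ℝ → ℝ} (h : ContDiff ℝ (⊤ : ℕ∞) Φ) (s y : ℝ) :
    HasDerivAt (fun r => Φ (r, y)) (dirD (1, 0) Φ (s, y)) s := by
  have h1 : HasFDerivAt Φ (fderiv ℝ Φ (s, y)) (s, y) :=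
    (h.differentiable (by simp) _).hasFDerivAt
  have h2 : HasDerivAt (fun r : ℝ => (r, y)) ((1 : ℝ), (0 : ℝ)) s :=
    (hasDerivAt_id s).prodMk (hasDerivAt_const s y)
  exact h1.comp_hasDerivAt s h2

lemma dirD_comm {Φ : ℝ × ℝ → ℝ} (h : ContDiff ℝ (⊤ : ℕ∞) Φ) (v w : ℝ × ℝ) :
    dirD v (dirD w Φ) = dirD w (dirD v Φ) := by
  funext p
  have h1 : ContDiff ℝ (⊤ : ℕ∞) (fderiv ℝ Φ) := h.fderiv_right (by simp)
  have hd : DifferentiableAt ℝ (fderiv ℝ Φ) p := h1.differentiable (by simp) p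
  have key : ∀ v w, dirD v (dirD w Φ) p = fderiv ℝ (fderiv ℝ Φ) p v w := by
    intro v w
    unfold dirD
    rw [fderiv_clm_apply hd (differentiableAt_const w)]
    simp
  rw [key, key]
  have := (h.contDiffAt (x := p)).isSymmSndFDerivAt (by
    rw [minSmoothness_of_isRCLikeNormedField]
    exact WithTop.coe_le_coe.2 (le_top : (2 : ℕ∞) ≤ ⊤))
  exact this v w

/-- Joint measurability of a weakly continuous family of cdfs. -/
lemma cdf_family_measurable {Q : ℝ → ProbabilityMeasure ℝ} (hQ : Continuous Q) :
    Measurable (fun p : ℝ × ℝ => (Q p.1 : Measure ℝ) (Set.Iic p.2)) := by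
  apply UpperSemicontinuous.measurable
  rintro ⟨s, y⟩ c hc
  simp only at hc
  have hcont : Tendsto (fun n : ℕ => (Q s : Measure ℝ) (Set.Iic (y + 1 / ((n : ℝ) + 1)))) atTop
      (𝓝 ((Q s : Measure ℝ) (⋂ n : ℕ, Set.Iic (y + 1 / ((n : ℝ) + 1))))) := by
    apply tendsto_measure_iInter_atTop
    · intro i; exact measurableSet_Iic.nullMeasurableSet
    · intro i j hij
      apply Set.Iic_subset_Iic.2
      have := Nat.one_div_le_one_div (α := ℝ) hij
      linarith
    · exact ⟨0, measure_ne_top _ _⟩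
  have hI : (⋂ n : ℕ, Set.Iic (y + 1 / ((n : ℝ) + 1))) = Set.Iic y := by
    ext z
    simp only [Set.mem_iInter, Set.mem_Iic]
    constructor
    · intro h
      have h0 : Tendsto (fun n : ℕ => y + 1 / ((n : ℝ) + 1)) atTop (𝓝 (y + 0)) :=
        tendsto_const_nhds.add tendsto_one_div_add_atTop_nhds_zero_nat
      rw [add_zero] at h0
      exact ge_of_tendsto' h0 h
    · intro h n
      have : 0 < 1 / ((n : ℝ) + 1) := Nat.one_div_pos_of_nat
      linarith
  rw [hI] at hcont
  obtain ⟨n, hn⟩ := (hcont.eventually (gt_mem_nhds hc)).exists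
  set δ : ℝ := 1 / ((n : ℝ) + 1) with hδ
  have hδ0 : 0 < δ := Nat.one_div_pos_of_nat
  have hls := ProbabilityMeasure.limsup_measure_closed_le_of_tendsto (hQ.tendsto s)
    (isClosed_Iic (a := y + δ))
  have hev : ∀ᶠ r in 𝓝 s, (Q r : Measure ℝ) (Set.Iic (y + δ)) < c :=
    eventually_lt_of_limsup_lt (hls.trans_lt hn)
  have hev2 : ∀ᶠ z in 𝓝 y, z < y + δ := gt_mem_nhds (by linarith)
  rw [nhds_prod_eq]
  filter_upwards [hev.prod_mk hev2] with p hp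
  exact (measure_mono (Set.Iic_subset_Iic.2 hp.2.le)).trans_lt hp.1

/-- integration by parts against a cdf -/
lemma integral_deriv_cdf (ν : Measure ℝ) [IsProbabilityMeasure ν] (f : ℝ → ℝ)
    (hf : ContDiff ℝ 1 f) (hc : HasCompactSupport f) :
    ∫ y, (-deriv f y) * (ν (Set.Iic y)).toReal = ∫ z, f z ∂ν := by
  have hdc : Continuous (deriv f) := hf.continuous_deriv le_rfl
  have hdi : Integrable (deriv f) := hdc.integrable_of_hasCompactSupport hc.deriv
  have h1 : ∀ y, (-deriv f y) * (ν (Set.Iic y)).toReal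
      = ∫ z, (Set.Iic y).indicator (fun _ => -deriv f y) z ∂ν := by
    intro y
    rw [integral_indicator measurableSet_Iic, setIntegral_const, smul_eq_mul, mul_comm]
    rfl
  simp_rw [h1]
  rw [integral_integral_swap]
  · congr 1
    funext z
    have : (fun y => (Set.Iic y).indicator (fun _ => -deriv f y) z)
        = (Set.Ici z).indicator (fun y => -deriv f y) := by
      funext y
      by_cases h : z ≤ y <;> simp [Set.indicator, h]
    rw [this, integral_indicator measurableSet_Ici, integral_Ici_eq_integral_Ioi, integral_neg,
      hc.integral_Ioi_deriv_eq hf, neg_neg]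
  · have hm : MeasurableSet {p : ℝ × ℝ | p.2 ≤ p.1} := measurableSet_le measurable_snd measurable_fst
    have heq : (Function.uncurry fun y z => (Set.Iic y).indicator (fun _ => -deriv f y) z)
        = {p : ℝ × ℝ | p.2 ≤ p.1}.indicator (fun p => -deriv f p.1) := by
      funext p
      by_cases h : p.2 ≤ p.1 <;> simp [Set.indicator, Function.uncurry, h]
    rw [heq]
    refine Integrable.indicator ?_ hm
    exact (hdi.neg).comp_fst ν

/-- integral of a derivative over a superlevel set of a cdf -/
lemma integral_superlevel (ν : Measure ℝ) [IsProbabilityMeasure ν] (h : ℝ → ℝ)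
    (hf : ContDiff ℝ 1 h) (hc : HasCompactSupport h) (u ε : ℝ) (hε : 0 ≤ ε)
    (hlow : ∀ y, -ε ≤ h y) :
    -ε ≤ ∫ y, {y : ℝ | u < (ν (Set.Iic y)).toReal}.indicator (fun y => -deriv h y) y := by
  set U := {y : ℝ | u < (ν (Set.Iic y)).toReal} with hU
  have hdc : Continuous (deriv h) := hf.continuous_deriv le_rfl
  have hdi : Integrable (deriv h) := hdc.integrable_of_hasCompactSupport hc.deriv
  have hup : ∀ x ∈ U, ∀ y, x ≤ y → y ∈ U := by
    intro x hx y hxy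
    simp only [hU, Set.mem_ofPred_eq] at hx ⊢
    refine hx.trans_le ?_
    exact ENNReal.toReal_mono (measure_ne_top _ _) (measure_mono (Set.Iic_subset_Iic.2 hxy))
  have hmono : Monotone fun y : ℝ => (ν (Set.Iic y)).toReal := fun x y hxy =>
    ENNReal.toReal_mono (measure_ne_top _ _) (measure_mono (Set.Iic_subset_Iic.2 hxy))
  have hUm : MeasurableSet U := measurableSet_lt measurable_const hmono.measurable
  rw [integral_indicator hUm]
  by_cases hne : U.Nonempty
  · by_cases hb : BddBelow U
    · set q := sInf U
      have hae : U =ᵐ[volume] Set.Ioi q := by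
        have h1 : Set.Ioi q ⊆ U := by
          intro y hy
          obtain ⟨z, hz, hzy⟩ := exists_lt_of_csInf_lt hne hy
          exact hup z hz y hzy.le
        have h2 : U ⊆ Set.Ici q := fun y hy => csInf_le hb hy
        have h3 : (Set.Ioi q : Set ℝ) =ᵐ[volume] Set.Ici q := Ioi_ae_eq_Ici
        refine Filter.EventuallyLE.antisymm ?_ (LE.le.eventuallyLE h1)
        exact (LE.le.eventuallyLE h2).trans h3.symm.le
      rw [setIntegral_congr_set hae, integral_neg, hc.integral_Ioi_deriv_eq hf, neg_neg]
      exact hlow q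
    · have hall : U = Set.univ := by
        ext y
        simp only [Set.mem_univ, iff_true]
        obtain ⟨z, hz, hzy⟩ := not_bddBelow_iff.1 hb y
        exact hup z hz y hzy.le
      rw [hall, setIntegral_univ, integral_neg, integral_eq_zero_of_hasDerivAt_of_integrable
        (fun x => (hf.differentiable one_ne_zero x).hasDerivAt) hdi
        (hf.continuous.integrable_of_hasCompactSupport hc)]
      simpa using hε
  · rw [Set.not_nonempty_iff_eq_empty.1 hne]
    simpa using hε

lemma layer_integral (c : ℝ → ℝ) (f : ℝ) (hf0 : 0 ≤ f) (hf1 : f ≤ 1) :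
    ∫ u in Set.Ioc (0:ℝ) 1, {u : ℝ | u < f}.indicator c u = ∫ u in (0:ℝ)..f, c u := by
  rw [intervalIntegral.integral_of_le hf0, integral_Ioc_eq_integral_Ioo (f := c) (x := 0) (y := f)]
  have hm : MeasurableSet {u : ℝ | u < f} := measurableSet_Iio
  rw [setIntegral_indicator hm]
  congr 2
  ext u
  simp only [Set.mem_inter_iff, Set.mem_Ioc, Set.mem_ofPred_eq, Set.mem_Ioo]
  constructor
  · rintro ⟨⟨h1, h2⟩, h3⟩; exact ⟨h1, h3⟩
  · rintro ⟨h1, h2⟩; exact ⟨⟨h1, by linarith⟩, h2⟩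

lemma bdd_of_compact {Φ : ℝ × ℝ → ℝ} (h : ContDiff ℝ (⊤ : ℕ∞) Φ) (hc : HasCompactSupport Φ) :
    ∃ M R : ℝ, 0 ≤ M ∧ ∀ s x, |Φ (s, x)| ≤ (Set.Icc (-R) R).indicator (fun _ => M) x := by
  obtain ⟨M, hM⟩ := h.continuous.bounded_above_of_compact_support hc
  obtain ⟨R, hR⟩ := hc.isBounded.exists_norm_le
  refine ⟨M, R, (norm_nonneg _).trans (hM (0, 0)), fun s x => ?_⟩
  by_cases hx : x ∈ Set.Icc (-R) R
  · simp only [Set.indicator, hx, if_true]; exact hM _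
  · simp only [Set.indicator, hx, if_false]
    have : Φ (s, x) = 0 := by
      by_contra hne
      have h1 := hR (s, x) (subset_tsupport _ hne)
      have h2 : |x| ≤ R := (norm_snd_le (s, x)).trans h1
      exact hx (abs_le.1 h2)
    simp [this]

lemma core_ineq (a b : ℝ → ℝ) (ha : Continuous a) (hb : Continuous b) (K : ℝ)
    (haK : ∀ u, |a u| ≤ K) (hbK : ∀ u, |b u| ≤ K)
    (m : Measure ℝ) [IsProbabilityMeasure m] (F : ℝ → ℝ → ℝ)
    (hF : IsWeakSolution (primitive a) (primitive b) (cdfOf m) F)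
    (P : ℝ → ProbabilityMeasure ℝ) (hP : ContinuousOn P (Set.Ici 0))
    (hFP : ∀ t : ℝ, 0 ≤ t → ∀ x : ℝ, F t x = ((P t : Measure ℝ) (Set.Iic x)).toReal)
    (Φ : ℝ × ℝ → ℝ) (hΦ : ContDiff ℝ (⊤ : ℕ∞) Φ) (hΦc : HasCompactSupport Φ)
    (t : ℝ) (ht : 0 < t) (ε : ℝ) (hε : 0 ≤ ε)
    (hlow : ∀ s ∈ Set.Icc 0 t, ∀ y, ∀ u ∈ Set.Icc (0:ℝ) 1,
      -ε ≤ (1/2) * a u * dirD (0,1) (dirD (0,1) Φ) (s, y) + b u * dirD (0,1) Φ (s, y)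
        + dirD (1,0) Φ (s, y)) :
    ∫ z, Φ (0, z) ∂m - ε * t ≤ ∫ z, Φ (t, z) ∂(P t : Measure ℝ) := by
  have hK0 : 0 ≤ K := (abs_nonneg _).trans (haK 0)
  set Y := dirD (0,1) Φ with hY
  set S := dirD (1,0) Φ with hS
  set YY := dirD (0,1) Y with hYY
  set YYY := dirD (0,1) YY with hYYY
  set YS := dirD (0,1) S with hYS
  have cY : ContDiff ℝ (⊤ : ℕ∞) Y := dirD_contDiff _ hΦ
  have cS : ContDiff ℝ (⊤ : ℕ∞) S := dirD_contDiff _ hΦ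
  have cYY : ContDiff ℝ (⊤ : ℕ∞) YY := dirD_contDiff _ cY
  have cYYY : ContDiff ℝ (⊤ : ℕ∞) YYY := dirD_contDiff _ cYY
  have cYS : ContDiff ℝ (⊤ : ℕ∞) YS := dirD_contDiff _ cS
  have kY : HasCompactSupport Y := dirD_compact _ hΦc
  have kS : HasCompactSupport S := dirD_compact _ hΦc
  have kYY : HasCompactSupport YY := dirD_compact _ kY
  have kYYY : HasCompactSupport YYY := dirD_compact _ kYY
  have kYS : HasCompactSupport YS := dirD_compact _ kS
  have hcomm : dirD (1,0) Y = YS := dirD_comm hΦ _ _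
  have W := hF (fun s y => - Y (s, y)) (by exact cY.neg)
    (by exact kY.neg) t ht.le
  -- slices
  have slice_c : ∀ s : ℝ, ∀ {Ψ : ℝ × ℝ → ℝ}, ContDiff ℝ (⊤ : ℕ∞) Ψ →
      ContDiff ℝ 1 (fun y => Ψ (s, y)) := by
    intro s Ψ h
    have : ContDiff ℝ (⊤ : ℕ∞) (fun y : ℝ => Ψ (s, y)) := h.comp (contDiff_const.prodMk contDiff_id)
    exact this.of_le (by exact_mod_cast le_top)
  have slice_k : ∀ s : ℝ, ∀ {Ψ : ℝ × ℝ → ℝ}, HasCompactSupport Ψ →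
      HasCompactSupport (fun y => Ψ (s, y)) := by
    intro s Ψ h
    obtain ⟨R, hR⟩ := h.isBounded.exists_norm_le
    refine HasCompactSupport.intro (isCompact_Icc (a := -R) (b := R)) fun x hx => ?_
    by_contra hne
    have h1 := hR (s, x) (subset_tsupport _ hne)
    have h2 : |x| ≤ R := (norm_snd_le (s, x)).trans h1
    exact hx (abs_le.1 h2)
  have dΦ : ∀ s, deriv (fun y => Φ (s, y)) = fun y => Y (s, y) := fun s => by
    funext y; exact (dirD_hasDerivAt_snd hΦ s y).deriv
  have d1 : ∀ s, deriv (fun y => -Y (s, y)) = fun y => -YY (s, y) := fun s => by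
    funext y; exact (dirD_hasDerivAt_snd cY s y).neg.deriv
  have d2 : ∀ s, deriv (fun y => -YY (s, y)) = fun y => -YYY (s, y) := fun s => by
    funext y; exact (dirD_hasDerivAt_snd cYY s y).neg.deriv
  have d3 : ∀ s x, deriv (fun r => -Y (r, x)) s = -YS (s, x) := fun s x => by
    rw [← hcomm]; exact (dirD_hasDerivAt_fst cY s x).neg.deriv
  simp only [d1, d2, d3] at W
  have e1 : ∫ x, -Y (t, x) * F t x = ∫ z, Φ (t, z) ∂(P t : Measure ℝ) := by
    rw [← integral_deriv_cdf (P t : Measure ℝ) (fun z => Φ (t, z)) (slice_c t hΦ) (slice_k t hΦc),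
      dΦ]
    simp only [hFP t ht.le]
  have e2 : ∫ x, -Y (0, x) * cdfOf m x = ∫ z, Φ (0, z) ∂m := by
    rw [← integral_deriv_cdf m (fun z => Φ (0, z)) (slice_c 0 hΦ) (slice_k 0 hΦc), dΦ]
    rfl
  rw [e1, e2] at W
  -- the extended family
  set Q : ℝ → ProbabilityMeasure ℝ := fun s => P (max s 0) with hQ
  have hQc : Continuous Q :=
    hP.comp_continuous (continuous_id.max continuous_const) (fun s => Set.mem_Ici.2 (le_max_right _ _))
  have hQm : Measurable (fun p : ℝ × ℝ => ((Q p.1 : Measure ℝ) (Set.Iic p.2)).toReal) :=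
    (cdf_family_measurable hQc).ennreal_toReal
  have hFQ : ∀ s, 0 ≤ s → ∀ x, F s x = ((Q s : Measure ℝ) (Set.Iic x)).toReal := by
    intro s hs x; rw [hFP s hs x, hQ]; simp only [max_eq_left hs]
  have hQ1 : ∀ s x, ((Q s : Measure ℝ) (Set.Iic x)).toReal ≤ 1 := fun s x => by
    have := prob_le_one (μ := (Q s : Measure ℝ)) (s := Set.Iic x)
    exact ENNReal.toReal_le_of_le_ofReal zero_le_one (by simpa using this)
  set c : ℝ → ℝ × ℝ → ℝ := fun x p =>
    (1/2) * a p.2 * (-YYY (p.1, x)) + b p.2 * (-YY (p.1, x)) + (-YS (p.1, x)) with hc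
  set J : ℝ → ℝ × ℝ → ℝ := fun x p =>
    {u : ℝ | u < ((Q p.1 : Measure ℝ) (Set.Iic x)).toReal}.indicator (fun u => c x (p.1, u)) p.2
    with hJ
  set νs : Measure ℝ := volume.restrict (Set.Ioc 0 t) with hνs
  set νu : Measure ℝ := volume.restrict (Set.Ioc 0 1) with hνu
  have hJm : Measurable (Function.uncurry J) := by
    have hset : MeasurableSet {q : ℝ × (ℝ × ℝ) |
        q.2.2 < ((Q q.2.1 : Measure ℝ) (Set.Iic q.1)).toReal} := by
      apply measurableSet_lt (by fun_prop)
      exact hQm.comp ((measurable_fst.comp measurable_snd).prodMk measurable_fst)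
    have heq : Function.uncurry J = {q : ℝ × (ℝ × ℝ) |
        q.2.2 < ((Q q.2.1 : Measure ℝ) (Set.Iic q.1)).toReal}.indicator (fun q => c q.1 q.2) := by
      funext q
      simp only [Function.uncurry, hJ, Set.indicator, Set.mem_ofPred_eq]
    rw [heq]
    refine Measurable.indicator ?_ hset
    have := cYYY.continuous
    have := cYY.continuous
    have := cYS.continuous
    apply Continuous.measurable
    simp only [hc]
    fun_prop
  obtain ⟨M1, R1, hM1, hb1⟩ := bdd_of_compact cYYY kYYY
  obtain ⟨M2, R2, hM2, hb2⟩ := bdd_of_compact cYY kYY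
  obtain ⟨M3, R3, hM3, hb3⟩ := bdd_of_compact cYS kYS
  set D : ℝ → ℝ := fun x => (1/2) * K * (Set.Icc (-R1) R1).indicator (fun _ => M1) x
    + K * (Set.Icc (-R2) R2).indicator (fun _ => M2) x
    + (Set.Icc (-R3) R3).indicator (fun _ => M3) x with hD
  have hDi : Integrable D := by
    have : ∀ M R : ℝ, Integrable ((Set.Icc (-R) R).indicator (fun _ => M)) := by
      intro M R
      rw [integrable_indicator_iff measurableSet_Icc]
      exact integrableOn_const (by simp)
    exact (((this M1 R1).const_mul _).add ((this M2 R2).const_mul _)).add (this M3 R3)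
  have hJD : ∀ x p, ‖J x p‖ ≤ D x := by
    intro x p
    have hcD : |c x (p.1, p.2)| ≤ D x := by
      simp only [hc, hD]
      refine (abs_add_three _ _ _).trans ?_
      rw [abs_mul, abs_mul, abs_mul, abs_neg, abs_neg, abs_neg, abs_of_pos (by norm_num : (0:ℝ) < 1/2)]
      have h1 := hb1 p.1 x
      have h2 := hb2 p.1 x
      have h3 := hb3 p.1 x
      have h4 := haK p.2
      have h5 := hbK p.2
      gcongr
    refine le_trans ?_ hcD
    exact norm_indicator_le_norm_self _ _
  have hJint : Integrable (Function.uncurry J) (volume.prod (νs.prod νu)) := by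
    refine Integrable.mono' (g := fun q => D q.1) (hDi.comp_fst _) hJm.aestronglyMeasurable ?_
    exact Filter.Eventually.of_forall fun q => hJD q.1 q.2
  have hsec : ∀ x, Integrable (J x) (νs.prod νu) := by
    intro x
    refine Integrable.mono' (g := fun _ => D x) (integrable_const _)
      (hJm.comp measurable_prodMk_left).aestronglyMeasurable ?_
    exact Filter.Eventually.of_forall fun q => hJD x q
  have e3 : (∫ x : ℝ, ∫ s in (0:ℝ)..t,
          ((1/2) * primitive a (F s x) * (-YYY (s, x)) + primitive b (F s x) * (-YY (s, x))
            + F s x * (-YS (s, x)))) = ∫ x, ∫ p, J x p ∂(νs.prod νu) := by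
    congr 1
    funext x
    rw [integral_prod _ (hsec x), intervalIntegral.integral_of_le ht.le]
    refine setIntegral_congr_fun measurableSet_Ioc fun s hs => ?_
    simp only [hJ]
    rw [layer_integral _ _ ENNReal.toReal_nonneg (hQ1 s x), ← hFQ s hs.1.le x]
    simp only [hc]
    have ia : IntervalIntegrable a volume 0 (F s x) := ha.intervalIntegrable _ _
    have ib : IntervalIntegrable b volume 0 (F s x) := hb.intervalIntegrable _ _
    rw [intervalIntegral.integral_add (((ia.const_mul _).mul_const _).add (ib.mul_const _))
      (by simp), intervalIntegral.integral_add ((ia.const_mul _).mul_const _) (ib.mul_const _),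
      intervalIntegral.integral_mul_const, intervalIntegral.integral_mul_const,
      intervalIntegral.integral_const_mul, intervalIntegral.integral_const]
    simp [primitive]
  rw [e3, integral_integral_swap hJint] at W
  have e4 : -(ε * t) ≤ ∫ p, (∫ x, J x p) ∂(νs.prod νu) := by
    have hi : Integrable (fun p => ∫ x, J x p) (νs.prod νu) := hJint.integral_prod_right
    have hconst : ∫ p : ℝ × ℝ, (-ε) ∂(νs.prod νu) = -(ε * t) := by
      rw [integral_const]
      have : (νs.prod νu).real Set.univ = t := by
        rw [Measure.real, ← Set.univ_prod_univ, Measure.prod_prod]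
        simp [hνs, hνu, ht.le]
      rw [this, smul_eq_mul]; ring
    rw [← hconst]
    refine integral_mono_ae (integrable_const _) hi ?_
    have hae : ∀ᵐ p ∂(νs.prod νu), p ∈ Set.Ioc 0 t ×ˢ Set.Ioc (0:ℝ) 1 := by
      rw [hνs, hνu, Measure.prod_restrict]
      exact ae_restrict_mem (measurableSet_Ioc.prod measurableSet_Ioc)
    filter_upwards [hae] with p hp
    set h : ℝ → ℝ := fun y => (1/2) * a p.2 * YY (p.1, y) + b p.2 * Y (p.1, y) + S (p.1, y) with hh
    have hd : deriv h = fun y => (1/2) * a p.2 * YYY (p.1, y) + b p.2 * YY (p.1, y)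
        + YS (p.1, y) := by
      funext y
      exact ((((dirD_hasDerivAt_snd cYY p.1 y).const_mul _).add
        ((dirD_hasDerivAt_snd cY p.1 y).const_mul _)).add (dirD_hasDerivAt_snd cS p.1 y)).deriv
    have key := integral_superlevel (Q p.1 : Measure ℝ) h
      (((contDiff_const.mul (slice_c p.1 cYY)).add (contDiff_const.mul (slice_c p.1 cY))).add
        (slice_c p.1 cS))
      ((((slice_k p.1 kYY).mul_left).add ((slice_k p.1 kY).mul_left)).add (slice_k p.1 kS))
      p.2 ε hε (fun y => hlow p.1 ⟨hp.1.1.le, hp.1.2⟩ y p.2 ⟨hp.2.1.le, hp.2.2⟩)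
    refine key.trans (le_of_eq ?_)
    congr 1
    funext y
    simp only [hJ, hd, hc, Set.indicator, Set.mem_ofPred_eq]
    split_ifs
    · ring
    · rfl
  linarith

/-- first derivative of `expNegInvGlue` -/
def glue1 (w : ℝ) : ℝ := w⁻¹ ^ 2 * expNegInvGlue w

/-- second derivative of `expNegInvGlue` -/
def glue2 (w : ℝ) : ℝ := (w⁻¹ ^ 4 - 2 * w⁻¹ ^ 3) * expNegInvGlue w

lemma glue_hasDerivAt (w : ℝ) : HasDerivAt expNegInvGlue (glue1 w) w := by
  have := expNegInvGlue.hasDerivAt_polynomial_eval_inv_mul 1 w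
  simpa [glue1] using this

lemma glue1_hasDerivAt (w : ℝ) : HasDerivAt glue1 (glue2 w) w := by
  have := expNegInvGlue.hasDerivAt_polynomial_eval_inv_mul (Polynomial.X ^ 2) w
  simp only [Polynomial.eval_pow, Polynomial.eval_X, Polynomial.derivative_X_pow,
    Polynomial.eval_mul, Polynomial.eval_sub, Polynomial.eval_C] at this
  refine this.congr_deriv ?_
  simp [glue2]
  ring_nf
  simp

lemma glue1_nonneg (w : ℝ) : 0 ≤ glue1 w :=
  mul_nonneg (by positivity) (expNegInvGlue.nonneg _)

lemma glue_le_one (w : ℝ) : expNegInvGlue w ≤ 1 := by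
  unfold expNegInvGlue
  split_ifs with h
  · norm_num
  · push Not at h
    rw [Real.exp_le_one_iff]
    have := inv_pos.2 h
    linarith

lemma glue1_le_two (w : ℝ) : glue1 w ≤ 2 := by
  unfold glue1 expNegInvGlue
  split_ifs with h
  · simp
  · push Not at h
    have h1 := inv_pos.2 h
    have h2 := Real.quadratic_le_exp_of_nonneg h1.le
    rw [Real.exp_neg, ← div_eq_mul_inv, div_le_iff₀ (Real.exp_pos _)]
    nlinarith

lemma glue1_mul_le (e : ℝ) (he : 0 < e) : glue1 (1/2 - e) * e ≤ 1 := by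
  by_cases h : 1/2 ≤ e
  · have : glue1 (1/2 - e) = 0 := by
      unfold glue1; rw [expNegInvGlue.zero_of_nonpos (by linarith)]; simp
    rw [this]; simp
  · push Not at h
    have := glue1_le_two (1/2 - e)
    have := glue1_nonneg (1/2 - e)
    nlinarith

lemma glue2_nonneg (w : ℝ) (hw : w ≤ 1/2) : 0 ≤ glue2 w := by
  unfold glue2
  by_cases h : w ≤ 0
  · rw [expNegInvGlue.zero_of_nonpos h]; simp
  · push Not at h
    refine mul_nonneg ?_ (expNegInvGlue.nonneg _)
    have h1 : 2 ≤ w⁻¹ := by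
      rw [le_inv_comm₀ (by norm_num) h]; linarith
    have h3 : 0 ≤ w⁻¹ ^ 3 := by positivity
    nlinarith

lemma glue_lower (e : ℝ) (he : 0 < e) (he1 : e ≤ 1/4) :
    (1 - 8 * e) * expNegInvGlue (1/2) ≤ expNegInvGlue (1/2 - e) := by
  unfold expNegInvGlue
  rw [if_neg (by norm_num), if_neg (by linarith)]
  have hpos : 0 < 1/2 - e := by linarith
  have h1 : -(8 * e) + (-(1/2:ℝ)⁻¹) ≤ -(1/2 - e)⁻¹ := by
    have : (1/2 - e)⁻¹ ≤ 2 + 8 * e := by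
      rw [inv_le_comm₀ hpos (by linarith), inv_le_iff_one_le_mul₀ (by linarith)]
      nlinarith
    norm_num at this ⊢
    linarith
  calc (1 - 8 * e) * Real.exp (-(1/2:ℝ)⁻¹)
      ≤ Real.exp (-(8 * e)) * Real.exp (-(1/2:ℝ)⁻¹) := by
        gcongr
        have := Real.add_one_le_exp (-(8 * e))
        linarith
    _ = Real.exp (-(8 * e) + (-(1/2:ℝ)⁻¹)) := (Real.exp_add _ _).symm
    _ ≤ _ := Real.exp_le_exp.2 h1

lemma cutoff_exists : ∃ (η η1 η2 : ℝ → ℝ) (C : ℝ), ContDiff ℝ (⊤ : ℕ∞) η ∧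
    (∀ z, HasDerivAt η (η1 z) z) ∧ (∀ z, HasDerivAt η1 (η2 z) z) ∧ 0 ≤ C ∧
    (∀ z, |η1 z| ≤ C) ∧ (∀ z, |η2 z| ≤ C) ∧ (∀ z, 0 ≤ η z) ∧ (∀ z, η z ≤ 1) ∧
    (∀ z, |z| ≤ 1 → η z = 1) ∧ (∀ z, 2 ≤ |z| → η z = 0) := by
  let f : ContDiffBump (0:ℝ) := ⟨1, 2, by norm_num, by norm_num⟩
  have hf : ContDiff ℝ (⊤ : ℕ∞) f := f.contDiff
  have hf1 : ContDiff ℝ (⊤ : ℕ∞) (deriv f) := by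
    have : ContDiff ℝ ((⊤ : ℕ∞) + 1) f := by simpa using hf
    exact (contDiff_succ_iff_deriv.1 this).2.2
  have hf2 : ContDiff ℝ (⊤ : ℕ∞) (deriv (deriv f)) := by
    have : ContDiff ℝ ((⊤ : ℕ∞) + 1) (deriv f) := by simpa using hf1
    exact (contDiff_succ_iff_deriv.1 this).2.2
  obtain ⟨C1, h1⟩ := hf1.continuous.bounded_above_of_compact_support f.hasCompactSupport.deriv
  obtain ⟨C2, h2⟩ := hf2.continuous.bounded_above_of_compact_support f.hasCompactSupport.deriv.deriv
  refine ⟨f, deriv f, deriv (deriv f), max C1 C2, hf,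
    fun z => (hf.differentiable (by simp) z).hasDerivAt,
    fun z => (hf1.differentiable (by simp) z).hasDerivAt,
    ((norm_nonneg _).trans (h1 0)).trans (le_max_left _ _),
    fun z => (h1 z).trans (le_max_left _ _), fun z => (h2 z).trans (le_max_right _ _),
    fun z => f.nonneg, fun z => f.le_one, fun z hz => ?_, fun z hz => ?_⟩
  · exact f.one_of_mem_closedBall (by simpa [Real.dist_eq] using hz)
  · exact f.zero_of_le_dist (by simpa [Real.dist_eq] using hz)

lemma barrier_alg (a b K lam mu e C N k k1 k2 h h1 h2 : ℝ) (ha : 0 ≤ a) (haK : a ≤ K)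
    (hbK : |b| ≤ K) (hmu : mu = K * (lam ^ 2 / 2 + |lam|)) (he : 0 < e)
    (hk0 : 0 ≤ k) (hk1 : k ≤ 1) (hk10 : 0 ≤ k1) (hk1e : k1 * e ≤ 1) (hk2 : 0 ≤ k2)
    (hC : 0 ≤ C) (hN : 1 ≤ N) (hh0 : 0 ≤ h) (hh1 : |h1| ≤ C) (hh2 : |h2| ≤ C) :
    -(K * C * (2 + |lam|) / N) ≤ (1/2) * a *
      ((h2 / N / N) * k + (h1 / N) * (k1 * (-(lam * e))) +
        ((h1 / N) * (k1 * (-(lam * e))) +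
          h * ((k2 * (-(lam * e))) * (-(lam * e)) + k1 * (-(lam * (lam * e))))))
      + b * ((h1 / N) * k + h * (k1 * (-(lam * e)))) + h * (k1 * (mu * e)) := by
  have hN0 : 0 < N := by linarith
  have hK : 0 ≤ K := ha.trans haK
  have main : 0 ≤ h * (k1 * e * (mu - (1/2) * a * lam ^ 2 - b * lam)
      + (1/2) * a * k2 * (lam * e) ^ 2) := by
    have hm : 0 ≤ mu - (1/2) * a * lam ^ 2 - b * lam := by
      have t1 : b * lam ≤ K * |lam| := by
        calc b * lam ≤ |b * lam| := le_abs_self _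
          _ = |b| * |lam| := abs_mul _ _
          _ ≤ _ := by gcongr
      have t2 : a * lam ^ 2 ≤ K * lam ^ 2 := by gcongr
      rw [hmu]; linarith
    positivity
  have b2 : |(1/2) * a * ((h2 / N / N) * k)| ≤ K * C / N := by
    rw [abs_mul, abs_mul, abs_mul, abs_of_pos (by norm_num : (0:ℝ) < 1/2), abs_div, abs_div,
      abs_of_pos hN0, abs_of_nonneg ha, abs_of_nonneg hk0]
    have : |h2| / N / N ≤ C / N := by
      rw [div_div]; gcongr; nlinarith
    calc 1/2 * a * (|h2| / N / N * k) ≤ 1 * K * (C / N * 1) := by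
          gcongr; norm_num
      _ = _ := by ring
  have b1 : |a * (h1 / N) * (k1 * e) * lam| ≤ K * C * |lam| / N := by
    rw [abs_mul, abs_mul, abs_mul, abs_div, abs_of_pos hN0, abs_of_nonneg ha,
      abs_of_nonneg (by positivity : 0 ≤ k1 * e)]
    calc a * (|h1| / N) * (k1 * e) * |lam| ≤ K * (C / N) * 1 * |lam| := by gcongr
      _ = _ := by ring
  have b0 : |b * ((h1 / N) * k)| ≤ K * C / N := by
    rw [abs_mul, abs_mul, abs_div, abs_of_pos hN0, abs_of_nonneg hk0]
    calc |b| * (|h1| / N * k) ≤ K * (C / N * 1) := by gcongr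
      _ = _ := by ring
  have c2 := (abs_le.1 b2).1
  have c1 := (abs_le.1 b1).2
  have c0 := (abs_le.1 b0).1
  have hs : K * C * (2 + |lam|) / N = K * C / N + K * C / N + K * C * |lam| / N := by ring
  rw [hs]
  nlinarith [main, c2, c1, c0]

lemma barrier_exists (a b : ℝ → ℝ) (K : ℝ) (ha0 : ∀ u, 0 ≤ a u) (haK : ∀ u, a u ≤ K)
    (hbK : ∀ u, |b u| ≤ K) (lam mu x t : ℝ) (hmu : mu = K * (lam ^ 2 / 2 + |lam|)) (ht : 0 < t) :
    ∃ c : ℝ, 0 ≤ c ∧ ∀ N : ℝ, 1 ≤ N → ∃ Φ : ℝ × ℝ → ℝ, ContDiff ℝ (⊤ : ℕ∞) Φ ∧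
      HasCompactSupport Φ ∧
      (∀ s ∈ Set.Icc 0 t, ∀ y, ∀ u ∈ Set.Icc (0:ℝ) 1,
      -(c / N) ≤ (1/2) * a u * dirD (0,1) (dirD (0,1) Φ) (s, y) + b u * dirD (0,1) Φ (s, y)
        + dirD (1,0) Φ (s, y)) ∧
      (∀ y, 0 ≤ Φ (0, y)) ∧
      (∀ y, Φ (t, y) ≤ expNegInvGlue (1/2 - Real.exp (lam * (y - x)))) ∧
      (∀ y, |y| ≤ N → Φ (0, y) = expNegInvGlue (1/2 - Real.exp (lam * (y - x) + mu * t))) := by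
  obtain ⟨η, η1, η2, C, hη, dη, dη1, hC, hb1, hb2, hη0, hη1, hone, hzero⟩ := cutoff_exists
  have hK : 0 ≤ K := (ha0 0).trans (haK 0)
  refine ⟨K * C * (2 + |lam|), by positivity, fun N hN => ?_⟩
  have hN0 : 0 < N := by linarith
  have hT : 0 < t + 1 := by linarith
  set E : ℝ → ℝ → ℝ := fun s y => Real.exp (lam * (y - x) + mu * (t - s)) with hE
  set Φ : ℝ × ℝ → ℝ := fun p => η (p.1 / (t + 1)) * (η (p.2 / N) * expNegInvGlue (1/2 - E p.1 p.2))
    with hΦdef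
  have hΦ : ContDiff ℝ (⊤ : ℕ∞) Φ := by
    have hg : ContDiff ℝ (⊤ : ℕ∞) expNegInvGlue := expNegInvGlue.contDiff
    have e1 : ContDiff ℝ (⊤ : ℕ∞) (fun p : ℝ × ℝ => 1/2 - E p.1 p.2) := by
      simp only [hE]; fun_prop
    have e2 : ContDiff ℝ (⊤ : ℕ∞) (fun p : ℝ × ℝ => p.1 / (t + 1)) := by fun_prop
    have e3 : ContDiff ℝ (⊤ : ℕ∞) (fun p : ℝ × ℝ => p.2 / N) := by fun_prop
    exact (hη.comp e2).mul ((hη.comp e3).mul (hg.comp e1))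
  have hΦc : HasCompactSupport Φ := by
    refine HasCompactSupport.intro
      ((isCompact_Icc (a := -(2 * (t + 1))) (b := 2 * (t + 1))).prod
        (isCompact_Icc (a := -(2 * N)) (b := 2 * N))) fun p hp => ?_
    simp only [hΦdef]
    rw [Set.mem_prod, not_and_or] at hp
    rcases hp with hp | hp
    · rw [hzero (p.1 / (t + 1)), zero_mul]
      rw [abs_div, abs_of_pos hT, le_div_iff₀ hT]
      by_contra hlt
      push Not at hlt
      exact hp (abs_le.1 hlt.le)
    · rw [hzero (p.2 / N), zero_mul, mul_zero]
      rw [abs_div, abs_of_pos hN0, le_div_iff₀ hN0]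
      by_contra hlt
      push Not at hlt
      exact hp (abs_le.1 hlt.le)
  have hth : ∀ s, |s| ≤ t + 1 → η (s / (t + 1)) = 1 := by
    intro s hs
    apply hone
    rw [abs_div, abs_of_pos hT, div_le_one hT]; exact hs
  have dE2 : ∀ s y, HasDerivAt (fun y => E s y) (lam * E s y) y := by
    intro s y
    have : HasDerivAt (fun y => lam * (y - x) + mu * (t - s)) lam y := by
      simpa using (((hasDerivAt_id y).sub_const x).const_mul lam).add_const (mu * (t - s))
    exact this.exp.congr_deriv (mul_comm _ _)
  have dE1 : ∀ s y, HasDerivAt (fun s => E s y) (-(mu * E s y)) s := by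
    intro s y
    have : HasDerivAt (fun s => lam * (y - x) + mu * (t - s)) (-mu) s := by
      simpa using (((hasDerivAt_id s).const_sub t).const_mul mu).const_add (lam * (y - x))
    have := this.exp
    convert this using 1
    simp only [hE]; ring
  have dw2 : ∀ s y, HasDerivAt (fun y => 1/2 - E s y) (-(lam * E s y)) y :=
    fun s y => (dE2 s y).const_sub _
  have dw1 : ∀ s y, HasDerivAt (fun s => 1/2 - E s y) (mu * E s y) s := fun s y => by
    exact ((dE1 s y).const_sub (1/2)).congr_deriv (neg_neg _)
  have dηN : ∀ y, HasDerivAt (fun y => η (y / N)) (η1 (y / N) / N) y := by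
    intro y
    exact ((dη (y / N)).comp y ((hasDerivAt_id y).div_const N)).congr_deriv (by ring)
  have dη1N : ∀ y, HasDerivAt (fun y => η1 (y / N) / N) (η2 (y / N) / N / N) y := by
    intro y
    exact (((dη1 (y / N)).comp y ((hasDerivAt_id y).div_const N)).div_const N).congr_deriv
      (by ring)
  have dk : ∀ s y, HasDerivAt (fun y => expNegInvGlue (1/2 - E s y))
      (glue1 (1/2 - E s y) * (-(lam * E s y))) y :=
    fun s y => (glue_hasDerivAt _).comp y (dw2 s y)
  have dk1 : ∀ s y, HasDerivAt (fun y => glue1 (1/2 - E s y))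
      (glue2 (1/2 - E s y) * (-(lam * E s y))) y :=
    fun s y => (glue1_hasDerivAt _).comp y (dw2 s y)
  have dks : ∀ s y, HasDerivAt (fun s => expNegInvGlue (1/2 - E s y))
      (glue1 (1/2 - E s y) * (mu * E s y)) s :=
    fun s y => (glue_hasDerivAt _).comp s (dw1 s y)
  refine ⟨Φ, hΦ, hΦc, ?_, ?_, ?_, ?_⟩
  · intro s hs y u hu
    have hs1 : η (s / (t + 1)) = 1 := hth s (by rw [abs_of_nonneg hs.1]; linarith [hs.2])
    have vY : ∀ y, dirD (0,1) Φ (s, y) = (η1 (y / N) / N) * expNegInvGlue (1/2 - E s y)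
        + η (y / N) * (glue1 (1/2 - E s y) * (-(lam * E s y))) := by
      intro y
      refine (dirD_hasDerivAt_snd hΦ s y).unique ?_
      have hfun : (fun y => Φ (s, y)) = fun y => η (y / N) * expNegInvGlue (1/2 - E s y) := by
        funext y; simp only [hΦdef, hs1, one_mul]
      rw [hfun]
      exact (dηN y).mul (dk s y)
    have vYY : dirD (0,1) (dirD (0,1) Φ) (s, y) =
      ((η2 (y / N) / N / N) * expNegInvGlue (1/2 - E s y)
        + (η1 (y / N) / N) * (glue1 (1/2 - E s y) * (-(lam * E s y))) +
        ((η1 (y / N) / N) * (glue1 (1/2 - E s y) * (-(lam * E s y))) +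
          η (y / N) * ((glue2 (1/2 - E s y) * (-(lam * E s y))) * (-(lam * E s y))
            + glue1 (1/2 - E s y) * (-(lam * (lam * E s y)))))) := by
      refine (dirD_hasDerivAt_snd (dirD_contDiff _ hΦ) s y).unique ?_
      have hfun : (fun y => dirD (0,1) Φ (s, y)) = fun y =>
        (η1 (y / N) / N) * expNegInvGlue (1/2 - E s y)
        + η (y / N) * (glue1 (1/2 - E s y) * (-(lam * E s y))) := by
        funext y; exact vY y
      rw [hfun]
      exact ((dη1N y).mul (dk s y)).add
        ((dηN y).mul ((dk1 s y).mul (((dE2 s y).const_mul lam).neg)))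
    have vS : dirD (1,0) Φ (s, y) = η (y / N) * (glue1 (1/2 - E s y) * (mu * E s y)) := by
      refine (dirD_hasDerivAt_fst hΦ s y).unique ?_
      have hloc : (fun s => Φ (s, y)) =ᶠ[𝓝 s] fun s => η (y / N) * expNegInvGlue (1/2 - E s y) := by
        have : Set.Ioo (-1) (t + 1) ∈ 𝓝 s := Ioo_mem_nhds (by linarith [hs.1]) (by linarith [hs.2])
        filter_upwards [this] with r hr
        simp only [hΦdef]
        rw [hth r (abs_le.2 ⟨by linarith [hr.1], hr.2.le⟩), one_mul]
      exact ((dks s y).const_mul _).congr_of_eventuallyEq hloc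
    rw [vY, vYY, vS]
    have hEpos : 0 < E s y := Real.exp_pos _
    exact barrier_alg (a u) (b u) K lam mu (E s y) C N _ _ _ _ _ _ (ha0 u) (haK u) (hbK u) hmu hEpos
      (expNegInvGlue.nonneg _) (glue_le_one _) (glue1_nonneg _) (glue1_mul_le _ hEpos)
      (glue2_nonneg _ (by linarith)) hC hN (hη0 _) (hb1 _) (hb2 _)
  · intro y
    exact mul_nonneg (hη0 _) (mul_nonneg (hη0 _) (expNegInvGlue.nonneg _))
  · intro y
    simp only [hΦdef, hE, sub_self, mul_zero, add_zero]
    rw [hth t (by rw [abs_of_pos ht]; linarith), one_mul]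
    exact mul_le_of_le_one_left (expNegInvGlue.nonneg _) (hη1 _)
  · intro y hy
    simp only [hΦdef, hE, sub_zero]
    rw [hth 0 (by rw [abs_zero]; linarith), one_mul, hone (y / N), one_mul]
    rw [abs_div, abs_of_pos hN0, div_le_one hN0]; exact hy

lemma compare_sets (a b : ℝ → ℝ) (ha : Continuous a) (hb : Continuous b) (K : ℝ)
    (ha0 : ∀ u, 0 ≤ a u) (haK : ∀ u, a u ≤ K) (hbK : ∀ u, |b u| ≤ K)
    (m : Measure ℝ) [IsProbabilityMeasure m] (F : ℝ → ℝ → ℝ)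
    (hF : IsWeakSolution (primitive a) (primitive b) (cdfOf m) F)
    (P : ℝ → ProbabilityMeasure ℝ) (hP : ContinuousOn P (Set.Ici 0))
    (hFP : ∀ t : ℝ, 0 ≤ t → ∀ x : ℝ, F t x = ((P t : Measure ℝ) (Set.Iic x)).toReal)
    (lam x t e : ℝ) (ht : 0 < t) (he : 0 < e) (S T : Set ℝ) (hS : MeasurableSet S)
    (hT : MeasurableSet T) (hTc : ∀ y, y ∉ T → 0 ≤ lam * (y - x))
    (hSe : ∀ y ∈ S, Real.exp (lam * (y - x) + K * (lam ^ 2 / 2 + |lam|) * t) ≤ e) :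
    (1 - 8 * e) * (m S).toReal ≤ ((P t : Measure ℝ) T).toReal := by
  by_cases hcase : 1 - 8 * e ≤ 0
  · exact (mul_nonpos_of_nonpos_of_nonneg hcase ENNReal.toReal_nonneg).trans ENNReal.toReal_nonneg
  push Not at hcase
  obtain ⟨c, hc, hbar⟩ := barrier_exists a b K ha0 haK hbK lam _ x t rfl ht
  set κ := expNegInvGlue (1/2) with hκ
  have hκ0 : 0 < κ := expNegInvGlue.pos_of_pos (by norm_num)
  have step : ∀ n : ℕ, κ * (1 - 8 * e) * (m (S ∩ Set.Icc (-((n:ℝ) + 1)) ((n:ℝ) + 1))).toReal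
      - c * t * (1 / ((n:ℝ) + 1)) ≤ κ * ((P t : Measure ℝ) T).toReal := by
    intro n
    have hN : (1:ℝ) ≤ (n:ℝ) + 1 := by have : (0:ℝ) ≤ n := Nat.cast_nonneg n; linarith
    have hN0 : (0:ℝ) < (n:ℝ) + 1 := by linarith
    obtain ⟨Φ, hΦ, hΦc, hlow, hpos, hend, hstart⟩ := hbar _ hN
    have main := core_ineq a b ha hb K (fun u => by rw [abs_of_nonneg (ha0 u)]; exact haK u) hbK
      m F hF P hP hFP Φ hΦ hΦc t ht (c / ((n:ℝ) + 1)) (by positivity) hlow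
    have hint : ∀ (ν : Measure ℝ) [IsProbabilityMeasure ν] (s : ℝ),
        Integrable (fun y => Φ (s, y)) ν := by
      intro ν _ s
      obtain ⟨M, hM⟩ := hΦ.continuous.bounded_above_of_compact_support hΦc
      have := hΦ.continuous
      have hcy : Continuous (fun y => Φ (s, y)) := by fun_prop
      exact Integrable.of_bound hcy.aestronglyMeasurable M
        (Filter.Eventually.of_forall fun y => hM (s, y))
    have up : ∫ z, Φ (t, z) ∂(P t : Measure ℝ) ≤ κ * ((P t : Measure ℝ) T).toReal := by
      have h1 : ∫ z, T.indicator (fun _ => κ) z ∂(P t : Measure ℝ)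
          = κ * ((P t : Measure ℝ) T).toReal := by
        rw [integral_indicator hT, setIntegral_const, smul_eq_mul, mul_comm]; rfl
      rw [← h1]
      refine integral_mono (hint _ t) ((integrable_const κ).indicator hT) fun y => ?_
      refine (hend y).trans ?_
      by_cases hy : y ∈ T
      · simp only [Set.indicator, hy, if_true]
        exact expNegInvGlue.monotone (by linarith [Real.exp_pos (lam * (y - x))])
      · simp only [Set.indicator, hy, if_false]
        rw [expNegInvGlue.zero_of_nonpos]
        have := Real.one_le_exp (hTc y hy)
        linarith
    have lo : κ * (1 - 8 * e) * (m (S ∩ Set.Icc (-((n:ℝ) + 1)) ((n:ℝ) + 1))).toReal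
        ≤ ∫ z, Φ (0, z) ∂m := by
      have hSm := hS.inter (measurableSet_Icc (a := -((n:ℝ) + 1)) (b := (n:ℝ) + 1))
      have h1 : ∫ z, (S ∩ Set.Icc (-((n:ℝ) + 1)) ((n:ℝ) + 1)).indicator
          (fun _ => κ * (1 - 8 * e)) z ∂m
          = κ * (1 - 8 * e) * (m (S ∩ Set.Icc (-((n:ℝ) + 1)) ((n:ℝ) + 1))).toReal := by
        rw [integral_indicator hSm, setIntegral_const, smul_eq_mul, mul_comm]; rfl
      rw [← h1]
      refine integral_mono ((integrable_const _).indicator hSm) (hint _ 0) fun y => ?_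
      by_cases hy : y ∈ S ∩ Set.Icc (-((n:ℝ) + 1)) ((n:ℝ) + 1)
      · simp only [Set.indicator, hy, if_true]
        rw [hstart y (abs_le.2 hy.2)]
        calc κ * (1 - 8 * e) = (1 - 8 * e) * expNegInvGlue (1/2) := mul_comm _ _
          _ ≤ expNegInvGlue (1/2 - e) := glue_lower e he (by linarith)
          _ ≤ _ := expNegInvGlue.monotone (by linarith [hSe y hy.1])
      · simp only [Set.indicator, hy, if_false]
        exact hpos y
    have : c / ((n:ℝ) + 1) * t = c * t * (1 / ((n:ℝ) + 1)) := by ring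
    linarith
  have hun : Tendsto (fun n : ℕ => m (S ∩ Set.Icc (-((n:ℝ) + 1)) ((n:ℝ) + 1))) atTop (𝓝 (m S)) := by
    have h1 : Monotone (fun n : ℕ => S ∩ Set.Icc (-((n:ℝ) + 1)) ((n:ℝ) + 1)) := by
      intro i j hij
      have : (i:ℝ) ≤ j := by exact_mod_cast hij
      exact Set.inter_subset_inter_right _ (Set.Icc_subset_Icc (by linarith) (by linarith))
    have h2 := tendsto_measure_iUnion_atTop (μ := m) h1
    have h3 : (⋃ n : ℕ, S ∩ Set.Icc (-((n:ℝ) + 1)) ((n:ℝ) + 1)) = S := by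
      rw [← Set.inter_iUnion]
      apply Set.inter_eq_left.2
      intro y _
      obtain ⟨n, hn⟩ := exists_nat_ge |y|
      exact Set.mem_iUnion.2 ⟨n, abs_le.1 (by linarith)⟩
    rwa [h3] at h2
  have hun' : Tendsto (fun n : ℕ => (m (S ∩ Set.Icc (-((n:ℝ) + 1)) ((n:ℝ) + 1))).toReal) atTop
      (𝓝 (m S).toReal) := (ENNReal.tendsto_toReal (measure_ne_top _ _)).comp hun
  have hlim := (hun'.const_mul (κ * (1 - 8 * e))).sub
    ((tendsto_one_div_add_atTop_nhds_zero_nat (𝕜 := ℝ)).const_mul (c * t))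
  have hfin := le_of_tendsto' hlim step
  rw [mul_zero, sub_zero, mul_assoc] at hfin
  exact le_of_mul_le_mul_left hfin hκ0

/-- extension of a function on `[0,1]` by constants -/
def ext01 (f : ℝ → ℝ) : ℝ → ℝ := fun u => f (max 0 (min u 1))

lemma ext01_mem (u : ℝ) : max 0 (min u 1) ∈ Set.Icc (0:ℝ) 1 :=
  ⟨le_max_left _ _, max_le zero_le_one (min_le_right _ _)⟩

lemma ext01_continuous {f : ℝ → ℝ} (hf : ContinuousOn f (Set.Icc 0 1)) : Continuous (ext01 f) :=
  hf.comp_continuous (by fun_prop) ext01_mem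

lemma primitive_ext01 (f : ℝ → ℝ) (v : ℝ) (hv : v ∈ Set.Icc (0:ℝ) 1) :
    primitive (ext01 f) v = primitive f v := by
  unfold primitive
  refine intervalIntegral.integral_congr fun u hu => ?_
  rw [Set.uIcc_of_le hv.1] at hu
  simp only [ext01]
  rw [min_eq_left (hu.2.trans hv.2), max_eq_right hu.1]

lemma weak_ext01 (a b : ℝ → ℝ) (F₀ : ℝ → ℝ) (F : ℝ → ℝ → ℝ)
    (h01 : ∀ s, 0 ≤ s → ∀ x, F s x ∈ Set.Icc (0:ℝ) 1)
    (hF : IsWeakSolution (primitive a) (primitive b) F₀ F) :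
    IsWeakSolution (primitive (ext01 a)) (primitive (ext01 b)) F₀ F := by
  intro g hg hgc t ht
  rw [hF g hg hgc t ht]
  congr 1
  funext x
  refine intervalIntegral.integral_congr fun s hs => ?_
  rw [Set.uIcc_of_le ht] at hs
  simp only [primitive_ext01 _ _ (h01 s hs.1 x)]

lemma exponent_bound (K t C ξ : ℝ) (hC0 : 16 ≤ C) (hC : 16 * K * t ≤ C) (hξ : C ≤ ξ) :
    8 * Real.exp (-(8 * ξ / C) * (ξ / 2 + C) + K * ((8 * ξ / C) ^ 2 / 2 + 8 * ξ / C) * t)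
      ≤ Real.exp (-(ξ ^ 2) / C) := by
  have hCp : 0 < C := by linarith
  obtain ⟨r, hr⟩ : ∃ r, ξ = r * C := ⟨ξ / C, by field_simp⟩
  have hr1 : 1 ≤ r := by
    rw [hr] at hξ
    by_contra h
    push Not at h
    nlinarith
  have e1 : 8 * ξ / C = 8 * r := by rw [hr]; field_simp
  have e2 : -(ξ ^ 2) / C = -(r ^ 2 * C) := by rw [hr]; field_simp
  rw [e1, e2, hr]
  have h8 : (8:ℝ) ≤ Real.exp (r ^ 2 * C) := by
    have h1 : 16 ≤ r ^ 2 * C := by nlinarith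
    have := Real.add_one_le_exp (r ^ 2 * C)
    linarith
  have hexp : -(8 * r) * (r * C / 2 + C) + K * ((8 * r) ^ 2 / 2 + 8 * r) * t
      ≤ -(r ^ 2 * C) + -(r ^ 2 * C) := by
    have : K * t * (32 * r ^ 2 + 8 * r) ≤ C / 16 * (32 * r ^ 2 + 8 * r) := by
      apply mul_le_mul_of_nonneg_right _ (by positivity)
      linarith
    nlinarith
  calc 8 * Real.exp (-(8 * r) * (r * C / 2 + C) + K * ((8 * r) ^ 2 / 2 + 8 * r) * t)
      ≤ Real.exp (r ^ 2 * C) * Real.exp (-(r ^ 2 * C) + -(r ^ 2 * C)) := by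
        gcongr
    _ = _ := by rw [← Real.exp_add]; ring_nf

lemma exponent_bound_one (K t C ξ : ℝ) (hC0 : 16 ≤ C) (hC : 16 * K * t ≤ C) (hξ : C ≤ ξ) :
    8 * Real.exp (-(ξ + C) + K * ((1:ℝ) / 2 + 1) * t) ≤ 1 / 2 := by
  have h1 : Real.exp (-(ξ + C) + K * ((1:ℝ) / 2 + 1) * t) ≤ Real.exp (-16) :=
    Real.exp_le_exp.2 (by nlinarith)
  have h2 : Real.exp (-16) ≤ 1 / 16 := by
    rw [Real.exp_neg, inv_le_comm₀ (Real.exp_pos _) (by norm_num)]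
    have := Real.add_one_le_exp (16:ℝ)
    norm_num
    linarith
  linarith

/-- Tail estimates on the probabilistic solution `F_t` in terms of the initial cdf
`F₀ = H*m`. -/
theorem probabilistic_solution_tail_estimates
    (a b : ℝ → ℝ)
    (ha : ContinuousOn a (Set.Icc 0 1)) (hb : ContinuousOn b (Set.Icc 0 1))
    (ha0 : ∀ u ∈ Set.Icc (0:ℝ) 1, 0 ≤ a u)
    (hD1 : StrictMonoOn (primitive a) (Set.Icc 0 1))
    (m : Measure ℝ) [IsProbabilityMeasure m]
    (hm : Integrable (fun x => |x|) m)
    (F : ℝ → ℝ → ℝ)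
    (hF : IsWeakSolution (primitive a) (primitive b) (cdfOf m) F) (hFmem : MemF F) :
    ∃ C : ℝ → ℝ,
      (∀ t : ℝ, 0 < t → 0 < C t) ∧
      MonotoneOn C (Set.Ioi 0) ∧
      ∀ t : ℝ, 0 < t →
        (∀ x : ℝ, x ≤ -C t →
          (1/2) * cdfOf m (2*x - C t) ≤ F t x ∧
          F t x ≤ cdfOf m (x/2 + C t) + Real.exp (-(x^2) / C t)) ∧
        (∀ x : ℝ, C t ≤ x →
          (1/2) * (1 - cdfOf m (2*x + C t)) ≤ 1 - F t x ∧
          1 - F t x ≤ 1 - cdfOf m (x/2 - C t) + Real.exp (-(x^2) / C t)) := by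
  obtain ⟨P, hP, -, -, hFP⟩ := hFmem
  have h01 : ∀ s, 0 ≤ s → ∀ x, F s x ∈ Set.Icc (0:ℝ) 1 := by
    intro s hs x
    rw [hFP s hs x]
    refine ⟨ENNReal.toReal_nonneg, ?_⟩
    have := prob_le_one (μ := (P s : Measure ℝ)) (s := Set.Iic x)
    exact ENNReal.toReal_le_of_le_ofReal zero_le_one (by simpa using this)
  have hF' := weak_ext01 a b _ F h01 hF
  obtain ⟨Ka, hKa⟩ := isCompact_Icc.exists_bound_of_continuousOn ha
  obtain ⟨Kb, hKb⟩ := isCompact_Icc.exists_bound_of_continuousOn hb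
  set K := max Ka Kb with hK
  have hK0 : 0 ≤ K := ((norm_nonneg _).trans (hKa 0 (by simp))).trans (le_max_left _ _)
  have ea0 : ∀ u, 0 ≤ ext01 a u := fun u => ha0 _ (ext01_mem u)
  have eaK : ∀ u, ext01 a u ≤ K := fun u =>
    ((le_abs_self _).trans (hKa _ (ext01_mem u))).trans (le_max_left _ _)
  have ebK : ∀ u, |ext01 b u| ≤ K := fun u => (hKb _ (ext01_mem u)).trans (le_max_right _ _)
  have cmp := compare_sets (ext01 a) (ext01 b) (ext01_continuous ha) (ext01_continuous hb) K
    ea0 eaK ebK m F hF' P hP hFP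
  have ioi : ∀ (ν : Measure ℝ) [IsProbabilityMeasure ν] (y : ℝ),
      (ν (Set.Ioi y)).toReal = 1 - (ν (Set.Iic y)).toReal := by
    intro ν _ y
    have := prob_compl_eq_one_sub (μ := ν) (measurableSet_Iic (a := y))
    rw [Set.compl_Iic] at this
    rw [this, ENNReal.toReal_sub_of_le prob_le_one ENNReal.one_ne_top, ENNReal.toReal_one]
  have m01 : ∀ y, 0 ≤ cdfOf m y ∧ cdfOf m y ≤ 1 := by
    intro y
    refine ⟨ENNReal.toReal_nonneg, ?_⟩
    have h := ioi m y
    have h2 : 0 ≤ (m (Set.Ioi y)).toReal := ENNReal.toReal_nonneg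
    simp only [cdfOf]
    linarith
  -- comparison to the left
  have left : ∀ t, 0 < t → ∀ lam, 0 < lam → ∀ x z,
      (1 - 8 * Real.exp (lam * (z - x) + K * (lam ^ 2 / 2 + |lam|) * t)) * cdfOf m z ≤ F t x := by
    intro t ht lam hlam x z
    rw [hFP t ht.le]
    refine cmp lam x t _ ht (Real.exp_pos _) (Set.Iic z) (Set.Iic x) measurableSet_Iic
      measurableSet_Iic (fun y hy => ?_) (fun y hy => ?_)
    · simp only [Set.mem_Iic, not_le] at hy
      exact mul_nonneg hlam.le (by linarith)
    · simp only [Set.mem_Iic] at hy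
      gcongr
  have right : ∀ t, 0 < t → ∀ lam, lam < 0 → ∀ x z,
      (1 - 8 * Real.exp (lam * (z - x) + K * (lam ^ 2 / 2 + |lam|) * t)) * (1 - cdfOf m z)
        ≤ 1 - F t x := by
    intro t ht lam hlam x z
    rw [hFP t ht.le, ← ioi (P t : Measure ℝ) x]
    simp only [cdfOf]
    rw [← ioi m z]
    refine cmp lam x t _ ht (Real.exp_pos _) (Set.Ioi z) (Set.Ioi x) measurableSet_Ioi
      measurableSet_Ioi (fun y hy => ?_) (fun y hy => ?_)
    · simp only [Set.mem_Ioi, not_lt] at hy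
      nlinarith
    · simp only [Set.mem_Ioi] at hy
      apply Real.exp_le_exp.2
      nlinarith
  refine ⟨fun t => 16 * K * t + 16, fun t ht => by positivity, ?_, ?_⟩
  · intro s _ t _ hst
    have : K * s ≤ K * t := mul_le_mul_of_nonneg_left hst hK0
    simp only
    linarith
  · intro t ht
    simp only
    set C := 16 * K * t + 16 with hC
    have hKt : 0 ≤ K * t := by positivity
    have hC16 : 16 ≤ C := by rw [hC]; linarith
    have hCK : 16 * K * t ≤ C := by rw [hC]; linarith
    have hC0 : 0 < C := by linarith
    refine ⟨fun x hx => ⟨?_, ?_⟩, fun x hx => ⟨?_, ?_⟩⟩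
    · have h := left t ht 1 one_pos x (2 * x - C)
      have hb := exponent_bound_one K t C (-x) hC16 hCK (by linarith)
      have he : (1:ℝ) * (2 * x - C - x) + K * (1 ^ 2 / 2 + |1|) * t
          = -(-x + C) + K * (1 / 2 + 1) * t := by rw [abs_one]; ring
      rw [he] at h
      have := (m01 (2 * x - C)).1
      nlinarith
    · have hneg : 8 * x / C < 0 := div_neg_of_neg_of_pos (by linarith) hC0
      have h := right t ht (8 * x / C) hneg x (x / 2 + C)
      have hb := exponent_bound K t C (-x) hC16 hCK (by linarith)
      have he : (8 * x / C) * (x / 2 + C - x) + K * ((8 * x / C) ^ 2 / 2 + |8 * x / C|) * t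
          = -(8 * (-x) / C) * (-x / 2 + C) + K * ((8 * (-x) / C) ^ 2 / 2 + 8 * (-x) / C) * t := by
        rw [abs_of_neg hneg]; ring
      rw [he] at h
      rw [neg_sq] at hb
      have h1 := m01 (x / 2 + C)
      have hp := Real.exp_pos (-(8 * (-x) / C) * (-x / 2 + C)
        + K * ((8 * (-x) / C) ^ 2 / 2 + 8 * (-x) / C) * t)
      nlinarith [mul_nonneg hp.le h1.1]
    · have h := right t ht (-1) (by norm_num) x (2 * x + C)
      have hb := exponent_bound_one K t C x hC16 hCK hx
      have he : (-1:ℝ) * (2 * x + C - x) + K * ((-1) ^ 2 / 2 + |-1|) * t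
          = -(x + C) + K * (1 / 2 + 1) * t := by rw [abs_neg, abs_one]; ring
      rw [he] at h
      have := (m01 (2 * x + C)).2
      nlinarith
    · have hpos : 0 < 8 * x / C := div_pos (by linarith) hC0
      have h := left t ht (8 * x / C) hpos x (x / 2 - C)
      have hb := exponent_bound K t C x hC16 hCK hx
      have he : (8 * x / C) * (x / 2 - C - x) + K * ((8 * x / C) ^ 2 / 2 + |8 * x / C|) * t
          = -(8 * x / C) * (x / 2 + C) + K * ((8 * x / C) ^ 2 / 2 + 8 * x / C) * t := by
        rw [abs_of_pos hpos]; ring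
      rw [he] at h
      have h1 := m01 (x / 2 - C)
      have hp := Real.exp_pos (-(8 * x / C) * (x / 2 + C)
        + K * ((8 * x / C) ^ 2 / 2 + 8 * x / C) * t)
      nlinarith [mul_nonneg hp.le (sub_nonneg.2 h1.2)]
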